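/- Let μ and ν be probability measures on ℝⁿ with finite first moments, let f* : ℝⁿ → ℝ be a 1-Lipschitz function maximizing ∫ f dμ − ∫ f dν over all 1-Lipschitz f, and assume f* is differentiable everywhere. Let π* be a coupling of μ and ν minimizing ∫‖x−y‖ dπ. Then for π*-almost every pair (x, y) with x ≠ y and every t ∈ (0,1), setting x_t = t·x + (1−t)·y, the gradient of f* at x_t is the unit vector (x − y)/‖x − y‖ pointing along the line from the generated point y toward the real point x. -/

import Mathlib

open MeasureTheory

/-!
The support of an optimal plan is cyclically monotone: otherwise conditioning the plan to small
neighbourhoods of finitely many pairs and recoupling the marginals cyclically would lower the cost.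
Rockafellar's construction turns cyclical monotonicity for the cost `dist` into a 1-Lipschitz `g`
with `g x - g y = dist x y` on the support. Comparing `f` with `g`, maximality of `f` forces
`f x - f y = dist x y` almost everywhere.

For such a pair, `f` lies between the cones `f x - dist · x` and `f y + dist · y`, which touch along
the segment from `x` to `y` and have the gradient `(x - y) / ‖x - y‖` in its interior. So `f` is
differentiable there, with the same gradient.
-/

open Filter ProbabilityTheory
open scoped ENNReal Topology

section Calculus

theorem hasFDerivAt_of_le_of_le {E : Type*} [NormedAddCommGroup E] [NormedSpace ℝ E]
    {l f u : E → ℝ} {f' : E →L[ℝ] ℝ} {x : E}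
    (hl : HasFDerivAt l f' x) (hu : HasFDerivAt u f' x)
    (hlf : ∀ᶠ z in 𝓝 x, l z ≤ f z) (hfu : ∀ᶠ z in 𝓝 x, f z ≤ u z)
    (hlx : l x = f x) (hux : u x = f x) : HasFDerivAt f f' x := by
  rw [hasFDerivAt_iff_isLittleO] at hl hu ⊢
  refine Asymptotics.IsBigO.trans_isLittleO (.of_bound' ?_) (hl.norm_left.add hu.norm_left)
  filter_upwards [hlf, hfu] with z hlz huz
  simp only [Real.norm_eq_abs, hlx, hux]
  grind

variable {E : Type*} [NormedAddCommGroup E] [InnerProductSpace ℝ E] [CompleteSpace E]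

theorem hasGradientAt_dist_right {x a : E} (hxa : x ≠ a) :
    HasGradientAt (fun z => dist z a) (‖x - a‖⁻¹ • (x - a)) x := by
  have hpos : 0 < ‖x - a‖ := norm_sub_pos_iff.2 hxa
  have hsqrt := ((hasFDerivAt_id x).sub_const a).norm_sq.sqrt (pow_pos hpos 2).ne'
  simp only [id, Real.sqrt_sq (norm_nonneg _)] at hsqrt
  simp only [hasGradientAt_iff_hasFDerivAt, dist_eq_norm]
  refine hsqrt.congr_fderiv (ContinuousLinearMap.ext fun v => ?_)
  simp only [one_div, mul_inv_rev, map_sub, ContinuousLinearMap.comp_id, smul_apply, sub_apply,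
    coe_innerSL_apply, nsmul_eq_mul, Nat.cast_ofNat, smul_eq_mul, map_smul,
    InnerProductSpace.toDual_apply_apply]
  field_simp

theorem hasGradientAt_of_mem_openSegment {f : E → ℝ} (hf : LipschitzWith 1 f) {x y m : E}
    (hxy : x ≠ y) (hfxy : f x - f y = dist x y) (hm : m ∈ openSegment ℝ x y) :
    HasGradientAt f (‖x - y‖⁻¹ • (x - y)) m := by
  have hmx : m ≠ x := by rintro rfl; exact hxy (left_mem_openSegment_iff.1 hm)
  have hmy : m ≠ y := by rintro rfl; exact hxy (right_mem_openSegment_iff.1 hm)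
  have hm' := openSegment_subset_segment ℝ x y hm
  have hdist := dist_add_dist_of_mem_segment hm'
  have hle (a b : E) : f a ≤ f b + dist a b := by simpa using hf.le_add_mul a b
  have hray : SameRay ℝ (x - m) (m - y) := by simpa using (sameRay_of_mem_segment hm').neg
  have hdir_y : ‖m - y‖⁻¹ • (m - y) = ‖x - y‖⁻¹ • (x - y) :=
    SameRay.inv_norm_smul_eq (sub_ne_zero.2 hmy) (sub_ne_zero.2 hxy) <| by
      simpa using hray.symm.add_right (SameRay.refl _)
  have hdir_x : -(‖m - x‖⁻¹ • (m - x)) = ‖x - y‖⁻¹ • (x - y) := by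
    rw [← smul_neg, neg_sub, norm_sub_rev]
    refine SameRay.inv_norm_smul_eq (sub_ne_zero.2 hmx.symm) (sub_ne_zero.2 hxy) ?_
    simpa using (SameRay.refl _).add_right hray
  have hupper : HasGradientAt (fun z => f y + dist z y) (‖x - y‖⁻¹ • (x - y)) m :=
    hdir_y ▸ (hasGradientAt_dist_right hmy).hasFDerivAt.const_add (f y)
  have hlower : HasGradientAt (fun z => f x - dist z x) (‖x - y‖⁻¹ • (x - y)) m := by
    rw [← hdir_x, hasGradientAt_iff_hasFDerivAt, map_neg]
    exact (hasGradientAt_dist_right hmx).hasFDerivAt.const_sub (f x)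
  refine hasFDerivAt_of_le_of_le hlower hupper (.of_forall fun z => ?_)
    (.of_forall fun z => hle z y) ?_ ?_
  all_goals grind [dist_comm]

end Calculus

section OptimalPlan

variable {X Y : Type*} [MeasurableSpace X] [MeasurableSpace Y] {c : X × Y → ℝ}
  {π ρ : Measure (X × Y)}

/-- A transport plan of finite cost that is cheapest among the plans of finite cost with the same
marginals. Competitors are required to be integrable since otherwise their Bochner integral is the
junk value `0`. -/
structure IsOptimalPlan (c : X × Y → ℝ) (π : Measure (X × Y)) : Prop where
  integrable : Integrable c π
  integral_le : ∀ ⦃ρ : Measure (X × Y)⦄, ρ.fst = π.fst → ρ.snd = π.snd → Integrable c ρ →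
    ∫ p, c p ∂π ≤ ∫ p, c p ∂ρ

theorem IsOptimalPlan.of_le [IsFiniteMeasure ρ] (hπ : IsOptimalPlan c π) (hρπ : ρ ≤ π) :
    IsOptimalPlan c ρ where
  integrable := hπ.integrable.mono_measure hρπ
  integral_le τ hfst hsnd hτ := by
    have hsplit : π - ρ + ρ = π := Measure.sub_add_cancel_of_le hρπ
    have hrest : Integrable c (π - ρ) := hπ.integrable.mono_measure Measure.sub_le
    have hle : ∫ p, c p ∂(π - ρ + ρ) ≤ ∫ p, c p ∂(π - ρ + τ) := by
      rw [hsplit]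
      refine hπ.integral_le ?_ ?_ (hrest.add_measure hτ)
      · rw [Measure.fst_add, hfst, ← Measure.fst_add, hsplit]
      · rw [Measure.snd_add, hsnd, ← Measure.snd_add, hsplit]
    rw [integral_add_measure hrest (hπ.integrable.mono_measure hρπ),
      integral_add_measure hrest hτ] at hle
    exact le_of_add_le_add_left hle

theorem IsOptimalPlan.of_smul {ε : ℝ≥0∞} (hε₀ : ε ≠ 0) (hε : ε ≠ ∞)
    (hρ : IsOptimalPlan c (ε • ρ)) : IsOptimalPlan c ρ where
  integrable := (integrable_smul_measure hε₀ hε).1 hρ.integrable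
  integral_le τ hfst hsnd hτ := by
    have hle : ∫ p, c p ∂(ε • ρ) ≤ ∫ p, c p ∂(ε • τ) := by
      refine hρ.integral_le ?_ ?_ (hτ.smul_measure hε)
      · simpa only [Measure.fst, Measure.map_smul] using congrArg (ε • ·) hfst
      · simpa only [Measure.snd, Measure.map_smul] using congrArg (ε • ·) hsnd
    rw [integral_smul_measure, integral_smul_measure] at hle
    exact le_of_mul_le_mul_left hle (ENNReal.toReal_pos hε₀ hε)

theorem exists_smul_sum_cond_le {Ω ι : Type*} [MeasurableSpace Ω] [Fintype ι] (μ : Measure Ω)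
    {W : ι → Set Ω} (hW : ∀ i, μ (W i) ≠ 0) :
    ∃ ε : ℝ≥0∞, ε ≠ 0 ∧ ε ≠ ∞ ∧ ε • ∑ i, μ[|W i] ≤ μ := by
  set C : ℝ≥0∞ := ∑ i, (μ (W i))⁻¹
  have hC : C ≠ ∞ := by simpa [C, ENNReal.sum_eq_top] using hW
  refine ⟨(C + 1)⁻¹, by simpa using hC, by simp, ?_⟩
  calc (C + 1)⁻¹ • ∑ i, μ[|W i]
      ≤ (C + 1)⁻¹ • ∑ i, (μ (W i))⁻¹ • μ := by
        unfold ProbabilityTheory.cond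
        gcongr
        exact Measure.restrict_le_self
    _ = ((C + 1)⁻¹ * C) • μ := by rw [← Finset.sum_smul, smul_smul]
    _ ≤ (1 : ℝ≥0∞) • μ := by
        gcongr
        rw [mul_comm, ← div_eq_mul_inv]
        exact ENNReal.div_le_of_le_mul (by simp)
    _ = μ := one_smul _ _

theorem ae_mem_prod_of_ae_mem {κ κ' : Measure (X × Y)} {U : Set X} {V : Set Y}
    (hU : MeasurableSet U) (hV : MeasurableSet V) (hκ : ∀ᵐ p ∂κ, p.1 ∈ U)
    (hκ' : ∀ᵐ p ∂κ', p.2 ∈ V) : ∀ᵐ q ∂κ.fst.prod κ'.snd, q ∈ U ×ˢ V :=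
  (Measure.quasiMeasurePreserving_fst.ae
    ((ae_map_iff measurable_fst.aemeasurable hU).2 hκ)).and
    (Measure.quasiMeasurePreserving_snd.ae ((ae_map_iff measurable_snd.aemeasurable hV).2 hκ'))

section Rearrangement

variable {ι : Type*} [Fintype ι]

theorem fst_sum_prod_marginals (κ : ι → Measure (X × Y)) [∀ i, IsProbabilityMeasure (κ i)]
    (σ : Equiv.Perm ι) : (∑ i, (κ (σ i)).fst.prod (κ i).snd).fst = (∑ i, κ i).fst :=
  calc (∑ i, (κ (σ i)).fst.prod (κ i).snd).fst
      = ∑ i, ((κ (σ i)).fst.prod (κ i).snd).fst := Measure.map_finset_sum (by fun_prop)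
    _ = ∑ i, (κ (σ i)).fst := by simp only [Measure.fst_prod]
    _ = ∑ i, (κ i).fst := Equiv.sum_comp σ fun i => (κ i).fst
    _ = (∑ i, κ i).fst := (Measure.map_finset_sum (by fun_prop)).symm

theorem snd_sum_prod_marginals (κ : ι → Measure (X × Y)) [∀ i, IsProbabilityMeasure (κ i)]
    (σ : Equiv.Perm ι) : (∑ i, (κ (σ i)).fst.prod (κ i).snd).snd = (∑ i, κ i).snd :=
  calc (∑ i, (κ (σ i)).fst.prod (κ i).snd).snd
      = ∑ i, ((κ (σ i)).fst.prod (κ i).snd).snd := Measure.map_finset_sum (by fun_prop)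
    _ = ∑ i, (κ i).snd := by simp only [Measure.snd_prod]
    _ = (∑ i, κ i).snd := (Measure.map_finset_sum (by fun_prop)).symm

theorem IsOptimalPlan.sum_cond [IsFiniteMeasure π] (hπ : IsOptimalPlan c π)
    {W : ι → Set (X × Y)} (hW : ∀ i, π (W i) ≠ 0) : IsOptimalPlan c (∑ i, π[|W i]) := by
  obtain ⟨ε, hε₀, hε, hle⟩ := exists_smul_sum_cond_le π hW
  have : IsFiniteMeasure (ε • ∑ i, π[|W i]) := isFiniteMeasure_of_le π hle
  exact (hπ.of_le hle).of_smul hε₀ hε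

theorem IsOptimalPlan.sum_integral_le {κ : ι → Measure (X × Y)} [∀ i, IsProbabilityMeasure (κ i)]
    (hκ : IsOptimalPlan c (∑ i, κ i)) (σ : Equiv.Perm ι)
    (hc : ∀ i, Integrable c ((κ (σ i)).fst.prod (κ i).snd)) :
    ∑ i, ∫ p, c p ∂κ i ≤ ∑ i, ∫ p, c p ∂((κ (σ i)).fst.prod (κ i).snd) := by
  rw [← integral_finsetSum_measure (integrable_finsetSum_measure.1 hκ.integrable),
    ← integral_finsetSum_measure fun i _ => hc i]
  exact hκ.integral_le (fst_sum_prod_marginals κ σ) (snd_sum_prod_marginals κ σ)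
    (integrable_finsetSum_measure.2 fun i _ => hc i)

theorem IsOptimalPlan.sum_le_sum_of_forall_mem [IsFiniteMeasure π] (hπ : IsOptimalPlan c π)
    (hc : Measurable c) {U : ι → Set X} {V : ι → Set Y} (hU : ∀ i, MeasurableSet (U i))
    (hV : ∀ i, MeasurableSet (V i)) (hpos : ∀ i, π (U i ×ˢ V i) ≠ 0) (σ : Equiv.Perm ι)
    {a b b' : ι → ℝ} (ha : ∀ i, ∀ q ∈ U i ×ˢ V i, a i ≤ c q)
    (hb : ∀ i, ∀ q ∈ U (σ i) ×ˢ V i, c q ∈ Set.Icc (b' i) (b i)) : ∑ i, a i ≤ ∑ i, b i := by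
  set κ : ι → Measure (X × Y) := fun i => π[|U i ×ˢ V i]
  have (i : ι) : IsProbabilityMeasure (κ i) := cond_isProbabilityMeasure (hpos i)
  have hκ : IsOptimalPlan c (∑ i, κ i) := hπ.sum_cond hpos
  have hmem (i : ι) : ∀ᵐ q ∂κ i, q ∈ U i ×ˢ V i := ae_cond_mem ((hU i).prod (hV i))
  have hτ (i : ι) : ∀ᵐ q ∂(κ (σ i)).fst.prod (κ i).snd, c q ∈ Set.Icc (b' i) (b i) :=
    (ae_mem_prod_of_ae_mem (hU _) (hV _) ((hmem _).mono fun _ h => h.1)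
      ((hmem _).mono fun _ h => h.2)).mono (hb i)
  have hcκ (i : ι) : Integrable c (κ i) :=
    integrable_finsetSum_measure.1 hκ.integrable i (Finset.mem_univ i)
  have hcτ (i : ι) : Integrable c ((κ (σ i)).fst.prod (κ i).snd) :=
    Integrable.of_mem_Icc _ _ hc.aemeasurable (hτ i)
  calc ∑ i, a i
      ≤ ∑ i, ∫ q, c q ∂κ i := Finset.sum_le_sum fun i _ => by
        simpa using integral_mono_ae (integrable_const (a i)) (hcκ i) ((hmem i).mono (ha i))
    _ ≤ ∑ i, ∫ q, c q ∂((κ (σ i)).fst.prod (κ i).snd) := hκ.sum_integral_le σ hcτ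
    _ ≤ ∑ i, b i := Finset.sum_le_sum fun i _ => by
        simpa using integral_mono_ae (hcτ i) (integrable_const (b i)) ((hτ i).mono fun _ h => h.2)

end Rearrangement

end OptimalPlan

section CyclicalMonotonicity

/-- Cyclical monotonicity of a set of pairs with respect to a cost: assigning to each `(p i).2` the
next first coordinate `(p (i + 1)).1` does not lower the total cost of finitely many pairs. The
addition on `Fin (N + 1)` is cyclic. -/
def IsCyclicallyMonotone {X Y : Type*} (c : X × Y → ℝ) (S : Set (X × Y)) : Prop :=
  ∀ (N : ℕ) (p : Fin (N + 1) → X × Y), (∀ i, p i ∈ S) →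
    ∑ i, c (p i) ≤ ∑ i, c ((p (i + 1)).1, (p i).2)

variable {X Y : Type*} [TopologicalSpace X] [TopologicalSpace Y] {c : X × Y → ℝ}

theorem exists_isOpen_forall_mem_Icc (hc : Continuous c) {ι : Type*} [Finite ι]
    (x : ι → X) (y : ι → Y) {δ : ℝ} (hδ : 0 < δ) :
    ∃ (U : ι → Set X) (V : ι → Set Y), (∀ i, IsOpen (U i) ∧ x i ∈ U i) ∧
      (∀ i, IsOpen (V i) ∧ y i ∈ V i) ∧
      ∀ i j, ∀ q ∈ U i ×ˢ V j, c q ∈ Set.Icc (c (x i, y j) - δ) (c (x i, y j) + δ) := by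
  have hnear (i j : ι) :
      ∀ᶠ q in 𝓝 (x i, y j), c q ∈ Set.Icc (c (x i, y j) - δ) (c (x i, y j) + δ) :=
    hc.continuousAt.eventually (Icc_mem_nhds (sub_lt_self _ hδ) (lt_add_of_pos_right _ hδ))
  choose U V hUo hxU hVo hyV hUV using fun i j => mem_nhds_prod_iff'.1 (hnear i j)
  refine ⟨fun i => ⋂ j, U i j, fun j => ⋂ i, V i j,
    fun i => ⟨isOpen_iInter_of_finite (hUo i), Set.mem_iInter.2 (hxU i)⟩,
    fun j => ⟨isOpen_iInter_of_finite fun i => hVo i j, Set.mem_iInter.2 fun i => hyV i j⟩,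
    fun i j q hq => hUV i j ?_⟩
  exact ⟨Set.mem_iInter.1 hq.1 j, Set.mem_iInter.1 hq.2 i⟩

variable [MeasurableSpace X] [MeasurableSpace Y]
  [OpensMeasurableSpace X] [OpensMeasurableSpace Y] [SecondCountableTopologyEither X Y]

theorem IsOptimalPlan.sum_le_sum_perm {π : Measure (X × Y)} [IsFiniteMeasure π]
    (hπ : IsOptimalPlan c π) (hc : Continuous c) {ι : Type*} [Fintype ι] {p : ι → X × Y}
    (hp : ∀ i, p i ∈ π.support) (σ : Equiv.Perm ι) :
    ∑ i, c (p i) ≤ ∑ i, c ((p (σ i)).1, (p i).2) := by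
  refine le_of_forall_pos_le_add fun η hη => ?_
  obtain ⟨δ, hδ, hδη⟩ := exists_pos_mul_lt hη (2 * Fintype.card ι)
  obtain ⟨U, V, hU, hV, hnear⟩ :=
    exists_isOpen_forall_mem_Icc hc (fun i => (p i).1) (fun i => (p i).2) hδ
  have hpos (i : ι) : π (U i ×ˢ V i) ≠ 0 :=
    ((Measure.mem_support_iff_forall _).1 (hp i) _
      (((hU i).1.prod (hV i).1).mem_nhds ⟨(hU i).2, (hV i).2⟩)).ne'
  have hsum : ∑ i, (c (p i) - δ) ≤ ∑ i, (c ((p (σ i)).1, (p i).2) + δ) :=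
    hπ.sum_le_sum_of_forall_mem hc.measurable (fun i => (hU i).1.measurableSet)
      (fun i => (hV i).1.measurableSet) hpos σ
      (fun i q hq => (hnear i i q hq).1)
      (fun i => hnear (σ i) i)
  simp only [Finset.sum_sub_distrib, Finset.sum_add_distrib, Finset.sum_const, Finset.card_univ,
    nsmul_eq_mul] at hsum
  linarith

theorem IsOptimalPlan.isCyclicallyMonotone_support {π : Measure (X × Y)} [IsFiniteMeasure π]
    (hπ : IsOptimalPlan c π) (hc : Continuous c) : IsCyclicallyMonotone c π.support :=
  fun _ _ hp => hπ.sum_le_sum_perm hc hp (Equiv.addRight 1)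

end CyclicalMonotonicity

section Potential

variable {X : Type*} [PseudoMetricSpace X]

/-- Cost of the path from `z₀` to `z` that runs through the pairs `p 0, …, p (N - 1)`, where the
jump from `(p i).1` to `(p i).2` is rewarded by its length and every other step is paid by its
length. -/
noncomputable def chainCost (z₀ : X) : (N : ℕ) → (Fin N → X × X) → X → ℝ
  | 0, _, z => dist z₀ z
  | N + 1, p, z => chainCost z₀ N (Fin.init p) (p (Fin.last N)).1
      - dist (p (Fin.last N)).1 (p (Fin.last N)).2 + dist (p (Fin.last N)).2 z

theorem chainCost_le_add_dist (z₀ : X) (N : ℕ) (p : Fin N → X × X) (z w : X) :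
    chainCost z₀ N p z ≤ chainCost z₀ N p w + dist z w := by
  cases N with
  | zero => simpa only [chainCost, dist_comm w z] using dist_triangle z₀ w z
  | succ N =>
    rw [chainCost, chainCost, add_assoc]
    gcongr
    exact (dist_triangle _ w z).trans_eq (by rw [dist_comm w z])

theorem chainCost_snoc (z₀ : X) (N : ℕ) (p : Fin N → X × X) (q : X × X) :
    chainCost z₀ (N + 1) (Fin.snoc p q) q.2 = chainCost z₀ N p q.1 - dist q.1 q.2 := by
  simp [chainCost]

theorem chainCost_succ_eq_sum (z₀ : X) (N : ℕ) (p : Fin (N + 1) → X × X) (z : X) :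
    chainCost z₀ (N + 1) p z = dist z₀ (p 0).1
      + ∑ i : Fin N, dist (p i.castSucc).2 (p i.succ).1 - ∑ i, dist (p i).1 (p i).2
      + dist (p (Fin.last N)).2 z := by
  induction N generalizing z with
  | zero => simp [chainCost]
  | succ N ih =>
    rw [chainCost, ih, Fin.sum_univ_castSucc fun i : Fin (N + 1) => dist (p i.castSucc).2 _,
      Fin.sum_univ_castSucc fun i : Fin (N + 2) => dist (p i).1 _]
    simp only [Fin.init, Fin.castSucc_zero, Fin.succ_castSucc, Fin.succ_last]
    ring

/-- Rockafellar's potential of `S`: the least cost of a path from `z₀` to `z` through finitely many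
pairs of `S`. Cyclical monotonicity of `S` makes the infimum finite. -/
noncomputable def rockafellarPotential (S : Set (X × X)) (z₀ z : X) : ℝ :=
  ⨅ a : Σ N, Fin N → S, chainCost z₀ a.1 (fun i => a.2 i) z

namespace IsCyclicallyMonotone

variable {S : Set (X × X)}

theorem neg_dist_le_chainCost
    (hS : IsCyclicallyMonotone (fun p => dist p.1 p.2) S) (z₀ : X) {N : ℕ} {p : Fin N → X × X}
    (hp : ∀ i, p i ∈ S) (z : X) : -dist z₀ z ≤ chainCost z₀ N p z := by
  cases N with
  | zero => simp [chainCost]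
  | succ N =>
    have hcycle : ∑ i, dist (p i).1 (p i).2
        ≤ ∑ i : Fin N, dist (p i.castSucc).2 (p i.succ).1 + dist (p 0).1 (p (Fin.last N)).2 := by
      have h := hS N p hp
      rw [Fin.sum_univ_castSucc fun i => dist (p (i + 1)).1 (p i).2] at h
      simpa only [Fin.coeSucc_eq_succ, Fin.last_add_one, dist_comm] using h
    have htri := dist_triangle4 (p 0).1 z₀ z (p (Fin.last N)).2
    rw [chainCost_succ_eq_sum]
    grind [dist_comm]

theorem bddBelow_range_chainCost (hS : IsCyclicallyMonotone (fun p => dist p.1 p.2) S)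
    (z₀ z : X) :
    BddBelow (Set.range fun a : Σ N, Fin N → S => chainCost z₀ a.1 (fun i => a.2 i) z) :=
  ⟨-dist z₀ z, Set.forall_mem_range.2 fun a => hS.neg_dist_le_chainCost z₀ (fun i => (a.2 i).2) z⟩

theorem lipschitzWith_rockafellarPotential
    (hS : IsCyclicallyMonotone (fun p => dist p.1 p.2) S) (z₀ : X) :
    LipschitzWith 1 (rockafellarPotential S z₀) := by
  have : Nonempty (Σ N, Fin N → S) := ⟨0, Fin.elim0⟩
  refine .of_le_add fun z w => sub_le_iff_le_add.1 <| le_ciInf fun a => sub_le_iff_le_add.2 ?_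
  exact (ciInf_le (hS.bddBelow_range_chainCost z₀ z) a).trans (chainCost_le_add_dist z₀ _ _ z w)

theorem dist_le_rockafellarPotential_sub
    (hS : IsCyclicallyMonotone (fun p => dist p.1 p.2) S) (z₀ : X) {q : X × X} (hq : q ∈ S) :
    dist q.1 q.2 ≤ rockafellarPotential S z₀ q.1 - rockafellarPotential S z₀ q.2 := by
  have : Nonempty (Σ N, Fin N → S) := ⟨0, Fin.elim0⟩
  rw [le_sub_iff_add_le']
  refine le_ciInf fun a => ?_
  have hle := ciInf_le (hS.bddBelow_range_chainCost z₀ q.2) ⟨a.1 + 1, Fin.snoc a.2 ⟨q, hq⟩⟩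
  have hsnoc := Fin.comp_snoc (Subtype.val : S → X × X) a.2 ⟨q, hq⟩
  simp only [Function.comp_def] at hsnoc
  simp only [hsnoc, chainCost_snoc] at hle
  exact le_sub_iff_add_le.1 hle

end IsCyclicallyMonotone

end Potential

section Duality

theorem integral_sub_marginals {X Y : Type*} [MeasurableSpace X] [MeasurableSpace Y]
    {π : Measure (X × Y)} {g : X → ℝ} {h : Y → ℝ} (hg : Integrable g π.fst)
    (hh : Integrable h π.snd) :
    ∫ p, (g p.1 - h p.2) ∂π = ∫ x, g x ∂π.fst - ∫ y, h y ∂π.snd := by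
  rw [Measure.fst, Measure.snd, integral_map measurable_fst.aemeasurable hg.1,
    integral_map measurable_snd.aemeasurable hh.1]
  exact integral_sub (hg.comp_measurable measurable_fst) (hh.comp_measurable measurable_snd)

variable {X : Type*} [PseudoMetricSpace X] [MeasurableSpace X] [OpensMeasurableSpace X]

theorem integrable_of_lipschitzWith {μ : Measure X} [IsFiniteMeasure μ] {x₀ : X}
    (hμ : Integrable (fun x => dist x x₀) μ) {K : NNReal} {g : X → ℝ} (hg : LipschitzWith K g) :
    Integrable g μ := by
  have hmeas : AEStronglyMeasurable g μ := hg.continuous.measurable.aestronglyMeasurable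
  have hdiff : Integrable (fun x => g x - g x₀) μ :=
    (hμ.const_mul K).mono' (hmeas.sub aestronglyMeasurable_const)
      (.of_forall fun x => hg.dist_le_mul x x₀)
  exact (hdiff.add (integrable_const (g x₀))).congr (.of_forall fun x => sub_add_cancel _ _)

variable {π : Measure (X × X)}

theorem integrable_dist_of_marginals [SecondCountableTopology X] {x₀ : X}
    (hfst : Integrable (fun x => dist x x₀) π.fst) (hsnd : Integrable (fun x => dist x x₀) π.snd) :
    Integrable (fun p => dist p.1 p.2) π := by
  refine ((hfst.comp_measurable measurable_fst).add (hsnd.comp_measurable measurable_snd)).mono'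
    (by fun_prop) (.of_forall fun p => ?_)
  simpa using dist_triangle_right p.1 p.2 x₀

theorem IsOptimalPlan.ae_sub_eq_dist [SecondCountableTopology X] [IsFiniteMeasure π]
    (hπ : IsOptimalPlan (fun p => dist p.1 p.2) π) {x₀ : X}
    (hfst : Integrable (fun x => dist x x₀) π.fst) (hsnd : Integrable (fun x => dist x x₀) π.snd)
    {f : X → ℝ} (hf : LipschitzWith 1 f)
    (hmax : IsMaxOn (fun g : X → ℝ => ∫ x, g x ∂π.fst - ∫ x, g x ∂π.snd)
      {g | LipschitzWith 1 g} f) :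
    ∀ᵐ p ∂π, f p.1 - f p.2 = dist p.1 p.2 := by
  have hint {g : X → ℝ} (hg : LipschitzWith 1 g) : Integrable (fun p => g p.1 - g p.2) π :=
    ((integrable_of_lipschitzWith hfst hg).comp_measurable measurable_fst).sub
      ((integrable_of_lipschitzWith hsnd hg).comp_measurable measurable_snd)
  have hsplit {g : X → ℝ} (hg : LipschitzWith 1 g) :=
    integral_sub_marginals (integrable_of_lipschitzWith hfst hg)
      (integrable_of_lipschitzWith hsnd hg)
  have hcyc := hπ.isCyclicallyMonotone_support continuous_dist
  set g : X → ℝ := rockafellarPotential π.support x₀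
  have hg : LipschitzWith 1 g := hcyc.lipschitzWith_rockafellarPotential x₀
  have hle (p : X × X) : f p.1 - f p.2 ≤ dist p.1 p.2 := by
    simpa [sub_le_iff_le_add, add_comm] using hf.le_add_mul p.1 p.2
  have hcost : ∫ p, dist p.1 p.2 ∂π ≤ ∫ p, (f p.1 - f p.2) ∂π :=
    calc ∫ p, dist p.1 p.2 ∂π
        ≤ ∫ p, (g p.1 - g p.2) ∂π := integral_mono_ae hπ.integrable (hint hg) <| by
          filter_upwards [Measure.support_mem_ae (μ := π)] with p hp
          exact hcyc.dist_le_rockafellarPotential_sub x₀ hp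
      _ = ∫ x, g x ∂π.fst - ∫ x, g x ∂π.snd := hsplit hg
      _ ≤ ∫ x, f x ∂π.fst - ∫ x, f x ∂π.snd := hmax hg
      _ = ∫ p, (f p.1 - f p.2) ∂π := (hsplit hf).symm
  exact (integral_eq_iff_of_ae_le (hint hf) hπ.integrable (.of_forall hle)).1
    ((integral_mono (hint hf) hπ.integrable hle).antisymm hcost)

end Duality

theorem gradient_of_optimal_critic_eq_unit_direction_general
    {E : Type*} [NormedAddCommGroup E] [InnerProductSpace ℝ E] [CompleteSpace E]
    [SecondCountableTopology E] [MeasurableSpace E] [OpensMeasurableSpace E]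
    {μ ν : Measure E} (hμ : Integrable (fun x => ‖x‖) μ) (hν : Integrable (fun x => ‖x‖) ν)
    {f : E → ℝ} (hf : LipschitzWith 1 f)
    (hfopt : ∀ g : E → ℝ, LipschitzWith 1 g →
      ∫ x, g x ∂μ - ∫ x, g x ∂ν ≤ ∫ x, f x ∂μ - ∫ x, f x ∂ν)
    {πs : Measure (E × E)} [IsProbabilityMeasure πs]
    (hπ₁ : πs.map Prod.fst = μ) (hπ₂ : πs.map Prod.snd = ν)
    (hπopt : ∀ π : Measure (E × E), IsProbabilityMeasure π → π.map Prod.fst = μ →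
      π.map Prod.snd = ν → ∫ p, ‖p.1 - p.2‖ ∂πs ≤ ∫ p, ‖p.1 - p.2‖ ∂π) :
    ∀ᵐ p ∂πs, p.1 ≠ p.2 → ∀ t ∈ Set.Ioo (0 : ℝ) 1,
      HasGradientAt f (‖p.1 - p.2‖⁻¹ • (p.1 - p.2)) (t • p.1 + (1 - t) • p.2) := by
  subst hπ₁ hπ₂
  simp only [← dist_zero_right] at hμ hν
  simp only [← dist_eq_norm] at hπopt
  have hopt : IsOptimalPlan (fun p => dist p.1 p.2) πs :=
    { integrable := integrable_dist_of_marginals hμ hν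
      integral_le := fun ρ hfst hsnd _ =>
        hπopt ρ ⟨by rw [← Measure.fst_univ, hfst, measure_univ]⟩ hfst hsnd }
  filter_upwards [hopt.ae_sub_eq_dist hμ hν hf hfopt] with p hp hne t ht
  exact hasGradientAt_of_mem_openSegment hf hne hp
    ⟨t, 1 - t, ht.1, sub_pos.2 ht.2, add_sub_cancel t 1, rfl⟩

/-- **Gradient direction of a differentiable optimal critic between coupled points.**
For an everywhere differentiable optimal 1-Lipschitz critic `f*` and an optimal
coupling `π*`, for `π*`-almost every `(x, y)` with `x ≠ y` and every `t ∈ (0,1)`,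
the gradient of `f*` at `x_t = t·x + (1−t)·y` is the unit vector `(x − y)/‖x − y‖`. -/
theorem gradient_of_optimal_critic_eq_unit_direction (n : ℕ)
    (μ ν : Measure (EuclideanSpace ℝ (Fin n)))
    [IsProbabilityMeasure μ] [IsProbabilityMeasure ν]
    (hμ : Integrable (fun x => ‖x‖) μ) (hν : Integrable (fun x => ‖x‖) ν)
    (f : EuclideanSpace ℝ (Fin n) → ℝ) (hf : LipschitzWith 1 f)
    (hfopt : ∀ g : EuclideanSpace ℝ (Fin n) → ℝ, LipschitzWith 1 g →
        ∫ x, g x ∂μ - ∫ x, g x ∂ν ≤ ∫ x, f x ∂μ - ∫ x, f x ∂ν)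
    (hdiff : Differentiable ℝ f)
    (πs : Measure (EuclideanSpace ℝ (Fin n) × EuclideanSpace ℝ (Fin n)))
    [IsProbabilityMeasure πs]
    (hπ₁ : πs.map Prod.fst = μ) (hπ₂ : πs.map Prod.snd = ν)
    (hπopt : ∀ π : Measure (EuclideanSpace ℝ (Fin n) × EuclideanSpace ℝ (Fin n)),
        IsProbabilityMeasure π → π.map Prod.fst = μ → π.map Prod.snd = ν →
          ∫ p, ‖p.1 - p.2‖ ∂πs ≤ ∫ p, ‖p.1 - p.2‖ ∂π) :
    ∀ᵐ p ∂πs, p.1 ≠ p.2 → ∀ t ∈ Set.Ioo (0 : ℝ) 1,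
      gradient f (t • p.1 + (1 - t) • p.2) = ‖p.1 - p.2‖⁻¹ • (p.1 - p.2) :=
  (gradient_of_optimal_critic_eq_unit_direction_general hμ hν hf hfopt hπ₁ hπ₂ hπopt).mono
    fun _ hp hne t ht => (hp hne t ht).gradient
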